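/- The graph K is constructible; moreover, x is the only vertex of K that is dominated by some other vertex of K, and y is the only vertex of K that dominates x. -/

import Mathlib

universe u

/-- `y` dominates `x` in `G`: `y ≠ x` and the closed neighbourhood of `x` is contained
in the closed neighbourhood of `y`. -/
def Dominates {V : Type u} (G : SimpleGraph V) (y x : V) : Prop :=
  y ≠ x ∧ ∀ z : V, (z = x ∨ G.Adj x z) → (z = y ∨ G.Adj y z)

/-- `y` dominates `x` in the subgraph of `G` induced by `S`. -/
def DominatesOn {V : Type u} (G : SimpleGraph V) (S : Set V) (y x : V) : Prop :=
  y ≠ x ∧ ∀ z ∈ S, (z = x ∨ G.Adj x z) → (z = y ∨ G.Adj y z)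

/-- `r` (a well-order on `V`) is a construction order for `G`: every non-root vertex `x`
(i.e. one with a strictly earlier vertex) is dominated, in the subgraph induced by the
vertices up to and including `x`, by some strictly earlier vertex. -/
def ConstructionOrderSpec {V : Type u} (G : SimpleGraph V) (r : V → V → Prop) : Prop :=
  ∀ x : V, (∃ y, r y x) → ∃ y, r y x ∧ DominatesOn G {z | r z x ∨ z = x} y x

/-- A graph is constructible if it has a construction order. -/
def Constructible {V : Type u} (G : SimpleGraph V) : Prop :=
  ∃ r : V → V → Prop, IsWellOrder V r ∧ ConstructionOrderSpec G r

/-- The vertices of the graph `K`. -/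
inductive KVert : Type
  | x | y | z | z' | t | t' | w
deriving DecidableEq

open KVert in
/-- The edges of the graph `K`: xy, xt, xt', yz, yz', yt, yt', zz', zt, zw, z't', z'w, tw, t'w. -/
def KRel : KVert → KVert → Prop := fun a b =>
  (a, b) ∈ ([(x, y), (x, t), (x, t'), (y, z), (y, z'), (y, t), (y, t'), (z, z'), (z, t),
      (z, w), (z', t'), (z', w), (t, w), (t', w)] : List (KVert × KVert))

/-- The graph `K`. -/
def KGraph : SimpleGraph KVert := SimpleGraph.fromRel KRel

instance : Fintype KVert where
  elems := {KVert.x, KVert.y, KVert.z, KVert.z', KVert.t, KVert.t', KVert.w}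
  complete := by intro a; cases a <;> decide

instance : DecidableRel KRel := fun a b => by unfold KRel; infer_instance

instance : DecidableRel KGraph.Adj := fun a b => by
  unfold KGraph SimpleGraph.fromRel; infer_instance

instance (a b : KVert) : Decidable (Dominates KGraph b a) := by
  unfold Dominates; infer_instance

/-- Position of a vertex in the construction order z, z', y, w, t, t', x. -/
def kRank : KVert → ℕ
  | KVert.z => 0
  | KVert.z' => 1
  | KVert.y => 2
  | KVert.w => 3
  | KVert.t => 4
  | KVert.t' => 5
  | KVert.x => 6

theorem kRank_inj : Function.Injective kRank := by
  intro a b; revert a b; decide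

theorem KGraph_constructible_and_unique_domination :
    Constructible KGraph ∧
    (∀ a b : KVert, Dominates KGraph b a → a = KVert.x) ∧
    (∀ b : KVert, Dominates KGraph b KVert.x → b = KVert.y) := by
  refine ⟨⟨fun a b => kRank a < kRank b, ?_, ?_⟩, by decide, by decide⟩
  · exact (RelEmbedding.mk ⟨kRank, kRank_inj⟩ Iff.rfl :
      (fun a b => kRank a < kRank b) ↪r ((· < ·) : ℕ → ℕ → Prop)).isWellOrder
  · unfold ConstructionOrderSpec DominatesOn
    simp only [Set.mem_setOf_eq]
    decide
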